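/- arXiv:2009.09852 — 2 statements merged into one kernel-verified Lean document; each statement's English description precedes it below -/
import Mathlib

section
/- Let (X, Y) be a pair of real-valued random variables defined on a probability space, i.e., a probability measure μ on ℝ², with marginal cumulative distribution functions F_X and F_Y, and let Q_X(u) = inf{x ∈ ℝ : F_X(x) ≥ u} and Q_Y(u) = inf{y ∈ ℝ : F_Y(y) ≥ u} denote the corresponding quantile (generalized inverse) functions. Suppose c : ℝ × ℝ → ℝ is measurable and satisfies the Monge condition, i.e., c(x', y') + c(x, y) ≤ c(x, y') + c(x', y) for all x ≤ x' and y ≤ y'. If c(X, Y) is integrable with respect to μ and the function u ↦ c(Q_X(u), Q_Y(u)) is integrable on (0,1) with respect to Lebesgue measure, then ∫₀¹ c(Q_X(u), Q_Y(u)) du ≤ E[c(X, Y)]. -/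
open MeasureTheory Set

/-!
The proof is Kantorovich duality along the comonotonic curve `u ↦ (Q_X u, Q_Y u)`, `0 < u < 1`.

*Potentials.* Pull the cost back to the kernel `k (s, t) = c (Q_X s, Q_Y t)`. The Monge condition
gives `φ` with `φ s + (k (t, t) - φ t) ≤ k (s, t)`: on finitely many parameters add up increments
from left to right, then pass to all parameters by compactness. Although `k` need not be
continuous, `φ` is measurable, because `φ - k (·, o)` is monotone before `o` and antitone after it.
Moreover `φ t` depends only on `Q_X t`, and `k (t, t) - φ t` only on `Q_Y t`, so there are `f`, `g`
with `f x + g y ≤ c (x, y)` on the ranges of `Q_X`, `Q_Y` and equality along the curve.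

*Integration.* The integral of `f x + g y` depends only on the marginals, which the curve shares
with `μ`. Neither `f` nor `g` need be integrable on its own, so both are first clamped to `[-n, n]`;
the clamped sum stays between `0` and `f x + g y`, and dominated convergence applies.
-/

open Filter Topology ProbabilityTheory

/-! ### Monge costs and their potentials -/

/-- The Monge condition (submodularity) for a cost on a product of two preorders. -/
def IsMonge {α β : Type*} [Preorder α] [Preorder β] (c : α × β → ℝ) : Prop :=
  ∀ ⦃x x' : α⦄, x ≤ x' → ∀ ⦃y y' : β⦄, y ≤ y' → c (x', y') + c (x, y) ≤ c (x, y') + c (x', y)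

lemma IsMonge.comp_prodMap {α β γ δ : Type*} [Preorder α] [Preorder β] [Preorder γ] [Preorder δ]
    {c : α × β → ℝ} (hc : IsMonge c) {x : γ → α} {y : δ → β} (hx : Monotone x) (hy : Monotone y) :
    IsMonge (c ∘ Prod.map x y) :=
  fun _ _ hs _ _ ht => hc (hx hs) (hy ht)

/-- `φ` and `t ↦ k (t, t) - φ t` are a pair of Kantorovich potentials for the kernel `k` on `S`:
their sum is at most `k` on `S × S`, and equals `k` on the diagonal. The second potential is
determined by the first and therefore not recorded. -/
def IsPotentialOn {ι : Type*} (k : ι × ι → ℝ) (S : Set ι) (φ : ι → ℝ) : Prop :=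
  ∀ s ∈ S, ∀ t ∈ S, φ s + (k (t, t) - φ t) ≤ k (s, t)

lemma IsMonge.exists_isPotentialOn_finset {ι : Type*} [LinearOrder ι] {k : ι × ι → ℝ}
    (hk : IsMonge k) (S : Finset ι) : ∃ φ, IsPotentialOn k S φ := by
  induction S using Finset.induction_on_max with
  | empty => exact ⟨0, by simp [IsPotentialOn]⟩
  | insert a S hlt ih =>
    obtain ⟨φ, hφ⟩ := ih
    rcases S.eq_empty_or_nonempty with rfl | hne
    · exact ⟨0, by simp [IsPotentialOn]⟩
    obtain ⟨m, hmS, hm⟩ : ∃ m ∈ S, ∀ s ∈ S, s ≤ m := ⟨S.max' hne, S.max'_mem hne, S.le_max'⟩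
    have hne_a : ∀ s ∈ S, s ≠ a := fun s hs => (hlt s hs).ne
    refine ⟨Function.update φ a (φ m + (k (a, m) - k (m, m))), fun s hs t ht => ?_⟩
    rcases Finset.mem_insert.1 hs with rfl | hsS <;> rcases Finset.mem_insert.1 ht with rfl | htS
    · simp
    · rw [Function.update_self, Function.update_of_ne (hne_a t htS)]
      linarith [hφ m hmS t htS, hk (hlt m hmS).le (hm t htS)]
    · rw [Function.update_self, Function.update_of_ne (hne_a s hsS)]
      linarith [hφ s hsS m hmS, hk (hlt s hsS).le (hlt m hmS).le]
    · rw [Function.update_of_ne (hne_a s hsS), Function.update_of_ne (hne_a t htS)]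
      exact hφ s hsS t htS

lemma exists_isPotentialOn_univ_of_forall_finset {ι : Type*} {k : ι × ι → ℝ}
    (hk : ∀ S : Finset ι, ∃ φ, IsPotentialOn k S φ) : ∃ φ, IsPotentialOn k univ φ := by
  rcases isEmpty_or_nonempty ι with _ | ⟨⟨o⟩⟩
  · exact ⟨0, fun s => isEmptyElim s⟩
  choose φ hφ using hk
  let F : Ultrafilter (Finset ι) := Ultrafilter.of atTop
  have mem_F : ∀ t, ∀ᶠ S : Finset ι in F, t ∈ S := fun t =>
    Ultrafilter.of_le atTop ((eventually_ge_atTop {t}).mono fun _ => Finset.singleton_subset_iff.1)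
  -- Normalized to vanish at `o`, the value at `t` stays in a compact interval along `F`.
  have exists_limit : ∀ t, ∃ l, Tendsto (fun S => φ S t - φ S o) F (𝓝 l) := fun t => by
    have bounded : ∀ᶠ S in F, φ S t - φ S o ∈ Icc (k (t, t) - k (o, t)) (k (t, o) - k (o, o)) := by
      filter_upwards [mem_F o, mem_F t] with S ho ht
      constructor <;> linarith [hφ S o ho t ht, hφ S t ht o ho]
    obtain ⟨l, -, hl⟩ := isCompact_Icc.ultrafilter_le_nhds
      (F.map fun S => φ S t - φ S o) (le_principal_iff.2 bounded)
    exact ⟨l, hl⟩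
  choose l hl using exists_limit
  refine ⟨l, fun s _ t _ => le_of_tendsto ((hl s).add ((hl t).const_sub (k (t, t)))) ?_⟩
  filter_upwards [mem_F s, mem_F t] with S hs ht
  linarith [hφ S s hs t ht]

lemma measurable_of_monotoneOn_Iic_of_antitoneOn_Ici {ι : Type*} [LinearOrder ι]
    [TopologicalSpace ι] [OrderTopology ι] [SecondCountableTopology ι] [MeasurableSpace ι]
    [BorelSpace ι] {h : ι → ℝ} {o : ι} (h_mono : MonotoneOn h (Iic o))
    (h_anti : AntitoneOn h (Ici o)) : Measurable h := by
  refine measurable_of_restrict_of_restrict_compl measurableSet_Iic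
    (Monotone.measurable (monotoneOn_iff_monotone.1 h_mono)) ?_
  rw [compl_Iic]
  exact Antitone.measurable (antitoneOn_iff_antitone.1 (h_anti.mono Ioi_subset_Ici_self))

lemma IsPotentialOn.measurable {ι : Type*} [LinearOrder ι] [TopologicalSpace ι] [OrderTopology ι]
    [SecondCountableTopology ι] [MeasurableSpace ι] [BorelSpace ι] {k : ι × ι → ℝ} {φ : ι → ℝ}
    (hφ : IsPotentialOn k univ φ) (hk : IsMonge k) {o : ι}
    (hko : Measurable fun s => k (s, o)) : Measurable φ := by
  have h_mono : MonotoneOn (fun s => φ s - k (s, o)) (Iic o) := fun s _ t ht hst => by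
    linarith [hφ s trivial t trivial, hk hst (mem_Iic.1 ht)]
  have h_anti : AntitoneOn (fun s => φ s - k (s, o)) (Ici o) := fun s hs t _ hst => by
    linarith [hφ t trivial s trivial, hk hst (mem_Ici.1 hs)]
  simpa only [sub_add_cancel] using
    (measurable_of_monotoneOn_Iic_of_antitoneOn_Ici h_mono h_anti).fun_add hko

section MonotoneCurve

variable {s : Set ℝ} {α β : Type*}
  [LinearOrder α] [TopologicalSpace α] [OrderTopology α] [MeasurableSpace α] [BorelSpace α]
  [LinearOrder β] [TopologicalSpace β] [OrderTopology β] [SecondCountableTopology β]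
  [MeasurableSpace β] [BorelSpace β]

/-- A right inverse of `x` on its range is monotone there, hence extends to a monotone map into the
complete lattice `EReal`. -/
lemma exists_measurable_rightInvOn_range_of_monotone [Nonempty s] (hs : MeasurableSet s)
    {x : s → α} (hx : Monotone x) : ∃ r : α → s, Measurable r ∧ RightInvOn r x (range x) := by
  let inv := Function.invFun x
  have x_inv : RightInvOn inv x (range x) := fun _ ha => Function.invFun_eq ha
  let e : s → EReal := fun u => ((u : ℝ) : EReal)
  have he : MeasurableEmbedding e :=
    EReal.isOpenEmbedding_coe.measurableEmbedding.comp (MeasurableEmbedding.subtype_coe hs)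
  have inv_mono : MonotoneOn (e ∘ inv) (range x) := fun a ha b hb hab => by
    rcases hab.eq_or_lt with rfl | hlt
    · rfl
    · rw [← x_inv ha, ← x_inv hb] at hlt
      exact EReal.coe_le_coe_iff.2 (hx.reflect_lt hlt).le
  obtain ⟨g, hg, hg_eq⟩ := inv_mono.exists_monotone_extension
    (OrderBot.bddBelow _) (OrderTop.bddAbove _)
  refine ⟨he.invFun ∘ g, he.measurable_invFun.comp hg.measurable, fun a ha => ?_⟩
  rw [Function.comp_apply, ← hg_eq ha, Function.comp_apply, he.leftInverse_invFun, x_inv ha]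

variable [SecondCountableTopology α]

lemma measurableSet_image_of_monotoneOn [s.OrdConnected] {x : ℝ → α} (hx : MonotoneOn x s) :
    MeasurableSet (x '' s) := by
  rcases s.eq_empty_or_nonempty with rfl | hne
  · simp
  have := hne.to_subtype
  have hx' : Monotone (s.domRestrict x) := monotoneOn_iff_monotone.1 hx
  obtain ⟨r, hr, hxr⟩ :=
    exists_measurable_rightInvOn_range_of_monotone (OrdConnected.measurableSet ‹_›) hx'
  have range_eq : range (s.domRestrict x) = {a | s.domRestrict x (r a) = a} :=
    Subset.antisymm (fun _ ha => hxr ha) fun a ha => ⟨r a, ha⟩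
  rw [← range_domRestrict, range_eq]
  exact measurableSet_eq_fun (hx'.measurable.comp hr) measurable_id

lemma ae_map_mem_image_of_monotoneOn [s.OrdConnected] {x : ℝ → α} (hx : MonotoneOn x s)
    (ν : Measure ℝ) : ∀ᵐ a ∂(ν.restrict s).map x, a ∈ x '' s := by
  have hs : MeasurableSet s := OrdConnected.measurableSet ‹_›
  refine (ae_map_iff (p := (· ∈ x '' s)) (aemeasurable_restrict_of_monotoneOn hs hx)
    (measurableSet_image_of_monotoneOn hx)).2 ?_
  exact (ae_restrict_mem hs).mono fun _ hu => mem_image_of_mem x hu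

lemma IsMonge.exists_measurable_potentials [s.OrdConnected] [Nonempty s] {c : α × β → ℝ}
    (hc : IsMonge c) (hc_meas : Measurable c) {x : s → α} {y : s → β} (hx : Monotone x)
    (hy : Monotone y) :
    ∃ f : α → ℝ, ∃ g : β → ℝ, Measurable f ∧ Measurable g ∧
      (∀ u v, f (x u) + g (y v) ≤ c (x u, y v)) ∧ ∀ u, f (x u) + g (y u) = c (x u, y u) := by
  have hs : MeasurableSet s := OrdConnected.measurableSet ‹_›
  obtain ⟨r, hr, hxr⟩ := exists_measurable_rightInvOn_range_of_monotone hs hx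
  obtain ⟨r', hr', hyr'⟩ := exists_measurable_rightInvOn_range_of_monotone hs hy
  replace hxr := fun u => hxr (mem_range_self u)
  replace hyr' := fun u => hyr' (mem_range_self u)
  have hk := hc.comp_prodMap hx hy
  obtain ⟨φ, hφ⟩ := exists_isPotentialOn_univ_of_forall_finset hk.exists_isPotentialOn_finset
  have hφ_le : ∀ u v, φ u + (c (x v, y v) - φ v) ≤ c (x u, y v) := fun u v =>
    hφ u trivial v trivial
  obtain ⟨o⟩ := ‹Nonempty s›
  have hφ_meas : Measurable φ :=
    hφ.measurable hk (hc_meas.comp (hx.measurable.prodMk (measurable_const (a := y o))))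
  have hψ_meas : Measurable fun v => c (x v, y v) - φ v :=
    (hc_meas.comp (hx.measurable.prodMk hy.measurable)).sub hφ_meas
  have sum_le : ∀ u v, φ (r (x u)) + (c (x (r' (y v)), y (r' (y v))) - φ (r' (y v)))
      ≤ c (x u, y v) := fun u v => by
    simpa only [hxr, hyr'] using hφ_le (r (x u)) (r' (y v))
  refine ⟨_, _, hφ_meas.comp hr, hψ_meas.comp hr', sum_le, fun u => (sum_le u u).antisymm ?_⟩
  have φ_le : φ u ≤ φ (r (x u)) := by
    have := hφ_le u (r (x u))
    rw [hxr] at this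
    linarith
  have ψ_le : c (x u, y u) - φ u ≤ c (x (r' (y u)), y (r' (y u))) - φ (r' (y u)) := by
    have := hφ_le (r' (y u)) u
    rw [hyr']
    linarith
  exact (add_sub_cancel (φ u) (c (x u, y u))).ge.trans (add_le_add φ_le ψ_le)

end MonotoneCurve

/-! ### Integrals determined by the marginals -/

/-- The projection of a real number to the interval `[-r, r]`, for `0 ≤ r`. -/
noncomputable def clamp (r a : ℝ) : ℝ := max (-r) (min r a)

lemma measurable_clamp (r : ℝ) : Measurable (clamp r) :=
  measurable_const.max (measurable_const.min measurable_id)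

lemma abs_clamp_le {r : ℝ} (hr : 0 ≤ r) (a : ℝ) : |clamp r a| ≤ r :=
  abs_le.2 ⟨le_max_left _ _, max_le (by linarith) (min_le_left _ _)⟩

lemma tendsto_clamp_atTop (a : ℝ) : Tendsto (fun r => clamp r a) atTop (𝓝 a) := by
  refine tendsto_const_nhds.congr' ?_
  filter_upwards [eventually_ge_atTop |a|] with r hr
  rw [clamp, min_eq_right (abs_le.1 hr).2, max_eq_right (abs_le.1 hr).1]

/-- `clamp r` is odd, monotone and `1`-Lipschitz, so `clamp r a - clamp r (-b)` lies between `0`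
and `a - (-b)`. -/
lemma clamp_add_clamp_mem_uIcc {r : ℝ} (hr : 0 ≤ r) (a b : ℝ) :
    clamp r a + clamp r b ∈ uIcc 0 (a + b) := by
  simp only [clamp, mem_uIcc]
  grind

lemma integrable_clamp {α : Type*} [MeasurableSpace α] {μ : Measure α} [IsFiniteMeasure μ]
    {f : α → ℝ} (hf : Measurable f) {r : ℝ} (hr : 0 ≤ r) : Integrable (fun a => clamp r (f a)) μ :=
  .of_bound ((measurable_clamp r).comp hf).aestronglyMeasurable r
    (.of_forall fun a => abs_clamp_le hr (f a))

section Marginals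

variable {α β : Type*} [MeasurableSpace α] [MeasurableSpace β] {γ μ : Measure (α × β)}
  {f : α → ℝ} {g : β → ℝ}

lemma integral_fst_add_snd (hf : Integrable f γ.fst) (hg : Integrable g γ.snd) :
    ∫ p, (f p.1 + g p.2) ∂γ = ∫ a, f a ∂γ.fst + ∫ b, g b ∂γ.snd := by
  calc ∫ p, (f p.1 + g p.2) ∂γ
    _ = ∫ p, f p.1 ∂γ + ∫ p, g p.2 ∂γ :=
      integral_add (hf.comp_measurable measurable_fst) (hg.comp_measurable measurable_snd)
    _ = ∫ a, f a ∂γ.fst + ∫ b, g b ∂γ.snd := by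
      rw [Measure.fst, Measure.snd,
        integral_map measurable_fst.aemeasurable hf.aestronglyMeasurable,
        integral_map measurable_snd.aemeasurable hg.aestronglyMeasurable]

lemma integral_fst_add_snd_le_of_marginals_eq [IsFiniteMeasure μ]
    (h_fst : γ.fst = μ.fst) (h_snd : γ.snd = μ.snd) (hf : Measurable f) (hg : Measurable g)
    {c : α × β → ℝ} (h_int : Integrable (fun p => f p.1 + g p.2) γ) (hc : Integrable c μ)
    (hle : ∀ᵐ p ∂μ, f p.1 + g p.2 ≤ c p) : ∫ p, (f p.1 + g p.2) ∂γ ≤ ∫ p, c p ∂μ := by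
  have : IsFiniteMeasure γ := ⟨by rw [← Measure.fst_univ, h_fst]; exact measure_lt_top _ _⟩
  let S : ℕ → α × β → ℝ := fun n p => clamp n (f p.1) + clamp n (g p.2)
  have S_integrable : ∀ (n : ℕ) (ν : Measure (α × β)) [IsFiniteMeasure ν], Integrable (S n) ν :=
    fun n ν _ => (integrable_clamp (hf.comp measurable_fst) n.cast_nonneg).add
      (integrable_clamp (hg.comp measurable_snd) n.cast_nonneg)
  have S_mem : ∀ n p, S n p ∈ uIcc 0 (f p.1 + g p.2) := fun n p =>
    clamp_add_clamp_mem_uIcc n.cast_nonneg _ _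
  have S_tendsto : ∀ p, Tendsto (S · p) atTop (𝓝 (f p.1 + g p.2)) := fun p =>
    ((tendsto_clamp_atTop _).add (tendsto_clamp_atTop _)).comp tendsto_natCast_atTop_atTop
  have S_marginals : ∀ n, ∫ p, S n p ∂γ = ∫ p, S n p ∂μ := fun n => by
    simp only [S, integral_fst_add_snd (integrable_clamp hf n.cast_nonneg)
      (integrable_clamp hg n.cast_nonneg), h_fst, h_snd]
  have γ_limit : Tendsto (fun n => ∫ p, S n p ∂γ) atTop (𝓝 (∫ p, (f p.1 + g p.2) ∂γ)) :=
    tendsto_integral_of_dominated_convergence _ (fun n => (S_integrable n γ).aestronglyMeasurable)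
      h_int.abs
      (fun n => .of_forall fun p => by simpa using abs_sub_left_of_mem_uIcc (S_mem n p))
      (.of_forall S_tendsto)
  -- Under `μ` there is no integrable minorant of `S n`, so `S n` is cut off from below at `c`.
  have μ_limit : Tendsto (fun n => ∫ p, max (S n p) (c p) ∂μ) atTop (𝓝 (∫ p, c p ∂μ)) := by
    refine tendsto_integral_of_dominated_convergence (fun p => |c p|)
      (fun n => ((S_integrable n μ).sup hc).aestronglyMeasurable) hc.abs (fun n => ?_) ?_
    · filter_upwards [hle] with p hp
      have S_le : S n p ≤ |c p| :=
        (S_mem n p).2.trans (sup_le (abs_nonneg _) (hp.trans (le_abs_self _)))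
      exact abs_le.2 ⟨(neg_abs_le _).trans (le_max_right _ _), max_le S_le (le_abs_self _)⟩
    · filter_upwards [hle] with p hp
      simpa only [max_eq_right hp] using (S_tendsto p).max (tendsto_const_nhds (x := c p))
  refine le_of_tendsto_of_tendsto' γ_limit μ_limit fun n => ?_
  rw [S_marginals n]
  exact integral_mono (S_integrable n μ) ((S_integrable n μ).sup hc) fun p => le_max_left _ _

end Marginals

/-! ### Quantile functions -/

/-- The quantile function (left-continuous generalized inverse of the distribution function) of a
measure on the line. It is only meaningful on `(0, 1)`: elsewhere the infimum may be that of an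
empty or unbounded set, hence `0`. -/
noncomputable def quantile (m : Measure ℝ) (u : ℝ) : ℝ := sInf {x | u ≤ cdf m x}

lemma quantile_le_iff (m : Measure ℝ) {u : ℝ} (hu : u ∈ Ioo (0 : ℝ) 1) (x : ℝ) :
    quantile m u ≤ x ↔ u ≤ cdf m x := by
  have nonempty : {x | u ≤ cdf m x}.Nonempty :=
    ((tendsto_cdf_atTop m).eventually_const_le hu.2).exists
  have bddBelow : BddBelow {x | u ≤ cdf m x} := by
    obtain ⟨z, hz⟩ := ((tendsto_cdf_atBot m).eventually_lt_const hu.1).exists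
    exact ⟨z, fun y hy => ((monotone_cdf m).reflect_lt (hz.trans_le hy)).le⟩
  refine ⟨fun hx => ?_, fun hx => csInf_le bddBelow hx⟩
  -- By right continuity of the distribution function the infimum is attained.
  have right_limit : Tendsto (cdf m) (𝓝[>] x) (𝓝 (cdf m x)) :=
    ((cdf m).right_continuous x).mono_left (nhdsWithin_mono _ Ioi_subset_Ici_self)
  refine ge_of_tendsto right_limit ?_
  filter_upwards [self_mem_nhdsWithin] with z hz
  obtain ⟨y, hy, hyz⟩ := exists_lt_of_csInf_lt nonempty (hx.trans_lt hz)
  exact hy.trans (monotone_cdf m hyz.le)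

lemma monotoneOn_quantile (m : Measure ℝ) : MonotoneOn (quantile m) (Ioo 0 1) :=
  fun _ hs _ ht hst => (quantile_le_iff m hs _).2 (hst.trans ((quantile_le_iff m ht _).1 le_rfl))

lemma map_quantile (m : Measure ℝ) [IsProbabilityMeasure m] :
    (volume.restrict (Ioo (0 : ℝ) 1)).map (quantile m) = m := by
  have h_meas : AEMeasurable (quantile m) (volume.restrict (Ioo (0 : ℝ) 1)) :=
    aemeasurable_restrict_of_monotoneOn measurableSet_Ioo (monotoneOn_quantile m)
  refine Measure.ext_of_Iic _ _ fun x => ?_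
  have preimage_eq : quantile m ⁻¹' Iic x ∩ Ioo 0 1 = Iic (cdf m x) ∩ Ioo 0 1 := by
    ext u
    exact and_congr_left fun hu => quantile_le_iff m hu x
  calc (volume.restrict (Ioo (0 : ℝ) 1)).map (quantile m) (Iic x)
    _ = volume (Iic (cdf m x) ∩ Ioo 0 1) := by
      rw [Measure.map_apply_of_aemeasurable h_meas measurableSet_Iic,
        Measure.restrict_apply' measurableSet_Ioo, preimage_eq]
    _ = volume (Iic (cdf m x) ∩ Ioc 0 1) :=
      measure_congr ((ae_eq_refl _).inter Ioo_ae_eq_Ioc)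
    _ = m (Iic x) := by
      rw [inter_comm, Ioc_inter_Iic, min_eq_right (cdf_le_one m x), Real.volume_Ioc, sub_zero,
        ofReal_cdf]

lemma cdf_map {Ω : Type*} [MeasurableSpace Ω] (μ : Measure Ω) [IsProbabilityMeasure μ] {X : Ω → ℝ}
    (hX : AEMeasurable X μ) (x : ℝ) : cdf (μ.map X) x = (μ {ω | X ω ≤ x}).toReal := by
  have := Measure.isProbabilityMeasure_map hX
  rw [cdf_eq_real, Measure.real, Measure.map_apply_of_aemeasurable hX measurableSet_Iic]
  rfl

/-! ### Optimality of comonotone couplings -/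

lemma IsMonge.setIntegral_comonotone_le {α β : Type*}
    [LinearOrder α] [TopologicalSpace α] [OrderTopology α] [SecondCountableTopology α]
    [MeasurableSpace α] [BorelSpace α]
    [LinearOrder β] [TopologicalSpace β] [OrderTopology β] [SecondCountableTopology β]
    [MeasurableSpace β] [BorelSpace β]
    {c : α × β → ℝ} (hc : IsMonge c) (hc_meas : Measurable c)
    {s : Set ℝ} [s.OrdConnected] [Nonempty s] {ν : Measure ℝ}
    {μ : Measure (α × β)} [IsFiniteMeasure μ]
    {x : ℝ → α} {y : ℝ → β} (hx : MonotoneOn x s) (hy : MonotoneOn y s)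
    (h_fst : (ν.restrict s).map x = μ.fst) (h_snd : (ν.restrict s).map y = μ.snd)
    (hν : IntegrableOn (fun u => c (x u, y u)) s ν) (hμ : Integrable c μ) :
    ∫ u in s, c (x u, y u) ∂ν ≤ ∫ p, c p ∂μ := by
  have hs : MeasurableSet s := OrdConnected.measurableSet ‹_›
  have hx_meas := aemeasurable_restrict_of_monotoneOn (μ := ν) hs hx
  have hy_meas := aemeasurable_restrict_of_monotoneOn (μ := ν) hs hy
  have hxy := hx_meas.prodMk hy_meas
  obtain ⟨f, g, hf, hg, hle, heq⟩ := hc.exists_measurable_potentials hc_meas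
    (monotoneOn_iff_monotone.1 hx) (monotoneOn_iff_monotone.1 hy)
  replace heq : ∀ u ∈ s, f (x u) + g (y u) = c (x u, y u) := fun u hu => heq ⟨u, hu⟩
  have hfg : Measurable fun p : α × β => f p.1 + g p.2 := by fun_prop
  have fst_mem : ∀ᵐ p ∂μ, p.1 ∈ x '' s :=
    have h : ∀ᵐ a ∂μ.fst, a ∈ x '' s := h_fst ▸ ae_map_mem_image_of_monotoneOn hx ν
    ae_of_ae_map measurable_fst.aemeasurable h
  have snd_mem : ∀ᵐ p ∂μ, p.2 ∈ y '' s :=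
    have h : ∀ᵐ a ∂μ.snd, a ∈ y '' s := h_snd ▸ ae_map_mem_image_of_monotoneOn hy ν
    ae_of_ae_map measurable_snd.aemeasurable h
  have hle_ae : ∀ᵐ p ∂μ, f p.1 + g p.2 ≤ c p := by
    filter_upwards [fst_mem, snd_mem]
    rintro ⟨-, -⟩ ⟨u, hu, rfl⟩ ⟨v, hv, rfl⟩
    exact hle ⟨u, hu⟩ ⟨v, hv⟩
  calc ∫ u in s, c (x u, y u) ∂ν
    _ = ∫ u in s, (f (x u) + g (y u)) ∂ν := setIntegral_congr_fun hs fun u hu => (heq u hu).symm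
    _ = ∫ p, (f p.1 + g p.2) ∂((ν.restrict s).map fun u => (x u, y u)) :=
      (integral_map hxy hfg.aestronglyMeasurable).symm
    _ ≤ ∫ p, c p ∂μ := by
      refine integral_fst_add_snd_le_of_marginals_eq ?_ ?_ hf hg ?_ hμ hle_ae
      · rw [Measure.fst_map_prodMk₀ hy_meas, h_fst]
      · rw [Measure.snd_map_prodMk₀ hx_meas, h_snd]
      · exact (integrable_map_measure hfg.aestronglyMeasurable hxy).2
          (hν.congr_fun (fun u hu => (heq u hu).symm) hs)

/-- Rachev–Rüschendorf lower bound (comonotonic coupling): for a submodular cost `c`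
(satisfying the Monge condition), the expectation of `c (X, Y)` under any joint
distribution `μ` on `ℝ²` with marginal CDFs `F_X, F_Y` is bounded below by the
comonotonic integral of `c` along the quantile functions. -/
theorem expectation_lower_bound_comonotonic
    (μ : Measure (ℝ × ℝ)) [IsProbabilityMeasure μ]
    (c : ℝ × ℝ → ℝ) (hc_meas : Measurable c)
    (hMonge : ∀ x x' y y' : ℝ, x ≤ x' → y ≤ y' →
      c (x', y') + c (x, y) ≤ c (x, y') + c (x', y))
    (FX FY QX QY : ℝ → ℝ)
    (hFX : ∀ x, FX x = (μ {p : ℝ × ℝ | p.1 ≤ x}).toReal)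
    (hFY : ∀ y, FY y = (μ {p : ℝ × ℝ | p.2 ≤ y}).toReal)
    (hQX : ∀ u, QX u = sInf {x : ℝ | u ≤ FX x})
    (hQY : ∀ u, QY u = sInf {y : ℝ | u ≤ FY y})
    (hint : Integrable c μ)
    (hint_quant : IntegrableOn (fun u => c (QX u, QY u)) (Ioo (0:ℝ) 1) volume) :
    ∫ u in Ioo (0:ℝ) 1, c (QX u, QY u) ≤ ∫ p, c p ∂μ := by
  have : Nonempty (Ioo (0 : ℝ) 1) := (nonempty_Ioo.2 one_pos).to_subtype
  obtain rfl : QX = quantile μ.fst := by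
    funext u
    simp only [hQX, hFX, quantile, Measure.fst, cdf_map μ measurable_fst.aemeasurable]
  obtain rfl : QY = quantile μ.snd := by
    funext u
    simp only [hQY, hFY, quantile, Measure.snd, cdf_map μ measurable_snd.aemeasurable]
  have hc : IsMonge c := fun x x' hx y y' hy => hMonge x x' y y' hx hy
  exact hc.setIntegral_comonotone_le hc_meas (monotoneOn_quantile _) (monotoneOn_quantile _)
    (map_quantile _) (map_quantile _) hint_quant hint
end

section
/- (Topkis's characterization) Let c : ℝ × ℝ → ℝ be such that for every fixed y the partial derivative ∂c/∂x(x, y) exists for all x, and for every fixed x the function y ↦ ∂c/∂x(x, y) is differentiable with ∂²c/(∂x∂y)(x, y) ≤ 0 for all x, y ∈ ℝ. Then c satisfies the Monge condition: c(x', y') + c(x, y) ≤ c(x, y') + c(x', y) for all x ≤ x' and y ≤ y'. -/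
/-! For `y ≤ y'`, the Monge inequality says that the difference `x ↦ c x y' - c x y` is antitone.
Its derivative is the increment of `∂c/∂x` from `y` to `y'`, which is nonpositive because
`∂c/∂x` is antitone in `y`. -/

section Monge

variable {α β γ : Type*} [Preorder α] [Preorder β]

/-- The Monge condition (submodularity) of a function of two variables on the product set `s ×ˢ t`.
The function is curried, as its variables are treated separately. -/
def MongeOn [Add γ] [LE γ] (c : α → β → γ) (s : Set α) (t : Set β) : Prop :=
  ∀ ⦃x⦄, x ∈ s → ∀ ⦃x'⦄, x' ∈ s → ∀ ⦃y⦄, y ∈ t → ∀ ⦃y'⦄, y' ∈ t → x ≤ x' → y ≤ y' →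
    c x' y' + c x y ≤ c x y' + c x' y

theorem mongeOn_iff_antitoneOn_sub [AddCommGroup γ] [Preorder γ] [AddLeftMono γ]
    {c : α → β → γ} {s : Set α} {t : Set β} :
    MongeOn c s t ↔
      ∀ y ∈ t, ∀ y' ∈ t, y ≤ y' → AntitoneOn (fun x => c x y' - c x y) s where
  mp h _ hy _ hy' hyy' _ hx _ hx' hxx' :=
    sub_le_sub_iff.mpr (h hx hx' hy hy' hxx' hyy')
  mpr h _ hx _ hx' y hy y' hy' hxx' hyy' :=
    sub_le_sub_iff.mp (h y hy y' hy' hyy' hx hx' hxx')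

end Monge

theorem topkis_monge_condition_general {β : Type*} [Preorder β] {c cx : ℝ → β → ℝ}
    {s : Set ℝ} {t : Set β} (hs : Convex ℝ s)
    (hc : ∀ y ∈ t, ContinuousOn (fun x => c x y) s)
    (hcx : ∀ x ∈ interior s, ∀ y ∈ t, HasDerivAt (fun u => c u y) (cx x y) x)
    (hanti : ∀ x ∈ interior s, AntitoneOn (cx x) t) :
    MongeOn c s t := by
  refine mongeOn_iff_antitoneOn_sub.mpr fun y hy y' hy' hyy' => ?_
  have hderiv : ∀ x ∈ interior s,
      HasDerivAt (fun u => c u y' - c u y) (cx x y' - cx x y) x :=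
    fun x hx => (hcx x hx y' hy').fun_sub (hcx x hx y hy)
  have hnonpos : ∀ x ∈ interior s, cx x y' - cx x y ≤ 0 :=
    fun x hx => sub_nonpos.mpr (hanti x hx hy hy' hyy')
  exact antitoneOn_of_hasDerivWithinAt_nonpos hs ((hc y' hy').sub (hc y hy))
    (fun x hx => (hderiv x hx).hasDerivWithinAt) hnonpos

/-- Topkis's characterization theorem: if `c : ℝ → ℝ → ℝ` has a partial derivative
`cx = ∂c/∂x` everywhere, and for each fixed `x` the function `y ↦ cx x y` is
differentiable with derivative `cxy x y = ∂²c/(∂x∂y)(x, y) ≤ 0` everywhere, then `c`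
satisfies the Monge condition (is submodular). -/
theorem topkis_monge_condition
    (c cx cxy : ℝ → ℝ → ℝ)
    (hcx : ∀ x y : ℝ, HasDerivAt (fun t => c t y) (cx x y) x)
    (hcxy : ∀ x y : ℝ, HasDerivAt (fun t => cx x t) (cxy x y) y)
    (hneg : ∀ x y : ℝ, cxy x y ≤ 0) :
    ∀ x x' y y' : ℝ, x ≤ x' → y ≤ y' →
      c x' y' + c x y ≤ c x y' + c x' y := by
  have hanti (x : ℝ) : Antitone (cx x) := antitone_of_hasDerivAt_nonpos (hcxy x) (hneg x)
  have hmonge : MongeOn c Set.univ Set.univ :=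
    topkis_monge_condition_general convex_univ
      (fun y _ x _ => (hcx x y).continuousAt.continuousWithinAt)
      (fun x _ y _ => hcx x y) (fun x _ => (hanti x).antitoneOn _)
  exact fun x x' y y' => hmonge trivial trivial trivial trivial
end
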